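/- Let M₀, B, ε₀ > 0 with ε₀ < M₀. Then there exist constants c, C > 0, depending only on M₀, B, ε₀, with the following property. Let u : ℝ² → ℂ be 2π-periodic and C¹ with |u|⁴ and ‖∇u‖² integrable on Q, and let n, v : ℝ² → ℝ be 2π-periodic with n², v² integrable on Q. Assume the Gagliardo–Nirenberg inequality ∫_Q |u|⁴ dx ≤ ( 2 M₀^{−1} ∫_Q ‖∇u‖² dx + B ∫_Q |u|² dx ) · ( ∫_Q |u|² dx ) and that ∫_Q |u|² dx = M₀ − ε₀. Then c ( ∫_Q |u|² + ∫_Q ‖∇u‖² + ∫_Q n² + ∫_Q v² ) ≤ E(u,n,v) + M₀ B ∫_Q |u|² dx ≤ C ( ∫_Q |u|² + ∫_Q ‖∇u‖² + ∫_Q n² + ∫_Q v² ). -/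

import Mathlib

/-!
Write `m = ∫ |u|²`. The only term of the energy without a sign is the interaction `∫ n |u|²`. For
`m ≤ a² M₀`, Young's inequality with weight `a` followed by the Gagliardo–Nirenberg inequality gives
`|∫ n |u|²| ≤ a (∫ ‖∇u‖² + ½ ∫ n² + ½ M₀ B m)`, because the factor `a⁻¹` lost on `∫ |u|⁴` is
compensated by `a²`. Hence the shifted energy differs from its interaction-free part by at most `a`
times that part, and a mass gap `ε₀` allows `a = 1 - ε₀ / (2 M₀) < 1`.
-/

open MeasureTheory Real Set

noncomputable section

abbrev R2 := EuclideanSpace ℝ (Fin 2)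

def Q2 : Set R2 := {x | ∀ i, x i ∈ Icc (-π) π}

def Periodic2 {E : Type*} (f : R2 → E) : Prop :=
  ∀ (x : R2) (k : Fin 2 → ℤ),
    f (x + (EuclideanSpace.equiv (Fin 2) ℝ).symm (fun i => 2 * π * (k i : ℝ))) = f x
/-- The Zakharov energy 𝓔(u,n,v). -/
noncomputable def zakharovEnergy (u : R2 → ℂ) (n v : R2 → ℝ) : ℝ :=
  (∫ x in Q2, ‖fderiv ℝ u x‖ ^ 2) + (1/2) * (∫ x in Q2, (n x) ^ 2)
    + (1/2) * (∫ x in Q2, (v x) ^ 2) + ∫ x in Q2, n x * ‖u x‖ ^ 2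

lemma isCompact_Q2 : IsCompact Q2 := by
  have hQ : Q2 = EuclideanSpace.equiv (Fin 2) ℝ ⁻¹' univ.pi fun _ => Icc (-π) π := by
    ext x
    simp only [Q2, mem_preimage, mem_univ_pi, mem_ofPred_eq, PiLp.coe_continuousLinearEquiv]
  rw [hQ]
  exact (EuclideanSpace.equiv (Fin 2) ℝ).toHomeomorph.isCompact_preimage.mpr
    (isCompact_univ_pi fun _ => isCompact_Icc)

lemma abs_integral_mul_le_add_integral_sq {α : Type*} [MeasurableSpace α] {μ : Measure α}
    {f g : α → ℝ} {a : ℝ} (ha : 0 < a) (hf : Integrable (fun x => f x ^ 2) μ)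
    (hg : Integrable (fun x => g x ^ 2) μ) :
    |∫ x, f x * g x ∂μ| ≤ a / 2 * (∫ x, f x ^ 2 ∂μ) + a⁻¹ / 2 * ∫ x, g x ^ 2 ∂μ := by
  have hf' := hf.const_mul (a / 2)
  have hg' := hg.const_mul (a⁻¹ / 2)
  rw [← integral_const_mul, ← integral_const_mul, ← integral_add hf' hg', ← Real.norm_eq_abs]
  refine norm_integral_le_of_norm_le (hf'.add hg') (.of_forall fun x => ?_)
  have young := two_mul_le_add_mul_sq (a := |f x|) (b := |g x|) ha
  rw [sq_abs, sq_abs] at young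
  rw [norm_mul, Real.norm_eq_abs, Real.norm_eq_abs]
  linarith

section GeneralMeasure

variable {E F : Type*} [NormedAddCommGroup E] [NormedSpace ℝ E] [MeasurableSpace E]
  [NormedAddCommGroup F] [NormedSpace ℝ F]

/-- The Zakharov energy relative to an arbitrary measure `μ`; `zakharovEnergy` is the case
`μ = volume.restrict Q2`. -/
def zakharovEnergyOn (μ : Measure E) (u : E → F) (n v : E → ℝ) : ℝ :=
  (∫ x, ‖fderiv ℝ u x‖ ^ 2 ∂μ) + (1 / 2) * (∫ x, n x ^ 2 ∂μ)
    + (1 / 2) * (∫ x, v x ^ 2 ∂μ) + ∫ x, n x * ‖u x‖ ^ 2 ∂μ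

/-- The square of the `H¹ × L² × L²` norm of `(u, n, v)`, taken with respect to `μ`. -/
def zakharovNormSq (μ : Measure E) (u : E → F) (n v : E → ℝ) : ℝ :=
  (∫ x, ‖u x‖ ^ 2 ∂μ) + (∫ x, ‖fderiv ℝ u x‖ ^ 2 ∂μ) + (∫ x, n x ^ 2 ∂μ) + ∫ x, v x ^ 2 ∂μ

/-- The Zakharov energy without its interaction term `∫ n |u|²`, shifted by `κ` times the mass
`∫ |u|²`. -/
def shiftedFreeEnergy (μ : Measure E) (κ : ℝ) (u : E → F) (n v : E → ℝ) : ℝ :=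
  κ * (∫ x, ‖u x‖ ^ 2 ∂μ) + (∫ x, ‖fderiv ℝ u x‖ ^ 2 ∂μ) + (1 / 2) * (∫ x, n x ^ 2 ∂μ)
    + (1 / 2) * ∫ x, v x ^ 2 ∂μ

/-- The two-dimensional Gagliardo–Nirenberg inequality for the single function `u`, normalised by
the critical mass `M₀`, with `B` the constant of the lower order term. -/
def GagliardoNirenberg (μ : Measure E) (M₀ B : ℝ) (u : E → F) : Prop :=
  (∫ x, ‖u x‖ ^ 4 ∂μ) ≤
    (2 * M₀⁻¹ * (∫ x, ‖fderiv ℝ u x‖ ^ 2 ∂μ) + B * (∫ x, ‖u x‖ ^ 2 ∂μ)) * (∫ x, ‖u x‖ ^ 2 ∂μ)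

variable {μ : Measure E} {u : E → F} {n v : E → ℝ} {M₀ B a κ : ℝ}

lemma zakharovEnergyOn_add_mass (κ : ℝ) :
    zakharovEnergyOn μ u n v + κ * (∫ x, ‖u x‖ ^ 2 ∂μ) =
      shiftedFreeEnergy μ κ u n v + ∫ x, n x * ‖u x‖ ^ 2 ∂μ := by
  unfold zakharovEnergyOn shiftedFreeEnergy
  ring

lemma shiftedFreeEnergy_nonneg (hκ : 0 ≤ κ) : 0 ≤ shiftedFreeEnergy μ κ u n v := by
  unfold shiftedFreeEnergy
  positivity

lemma min_mul_zakharovNormSq_le_shiftedFreeEnergy :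
    min κ (1 / 2) * zakharovNormSq μ u n v ≤ shiftedFreeEnergy μ κ u n v := by
  have h_mass : min κ (1 / 2) ≤ κ := min_le_left _ _
  have h_half : min κ (1 / 2) ≤ 1 / 2 := min_le_right _ _
  have h_grad : min κ (1 / 2) ≤ 1 := h_half.trans (by norm_num)
  rw [zakharovNormSq, shiftedFreeEnergy, mul_add, mul_add, mul_add]
  gcongr
  exact mul_le_of_le_one_left (by positivity) h_grad

lemma shiftedFreeEnergy_le_max_mul_zakharovNormSq :
    shiftedFreeEnergy μ κ u n v ≤ max κ 1 * zakharovNormSq μ u n v := by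
  have h_mass : κ ≤ max κ 1 := le_max_left _ _
  have h_grad : 1 ≤ max κ 1 := le_max_right _ _
  have h_half : 1 / 2 ≤ max κ 1 := le_trans (by norm_num) h_grad
  rw [zakharovNormSq, shiftedFreeEnergy, mul_add, mul_add, mul_add]
  gcongr
  exact le_mul_of_one_le_left (by positivity) h_grad

lemma GagliardoNirenberg.integral_norm_pow_four_le (hGN : GagliardoNirenberg μ M₀ B u)
    (hM : 0 < M₀) (hB : 0 ≤ B) (hm : ∫ x, ‖u x‖ ^ 2 ∂μ ≤ a ^ 2 * M₀) :
    ∫ x, ‖u x‖ ^ 4 ∂μ ≤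
      a ^ 2 * (2 * (∫ x, ‖fderiv ℝ u x‖ ^ 2 ∂μ) + M₀ * B * ∫ x, ‖u x‖ ^ 2 ∂μ) := by
  calc
    _ ≤ (2 * M₀⁻¹ * (∫ x, ‖fderiv ℝ u x‖ ^ 2 ∂μ) + B * (∫ x, ‖u x‖ ^ 2 ∂μ)) * (a ^ 2 * M₀) :=
      hGN.trans (by gcongr)
    _ = _ := by field_simp

lemma GagliardoNirenberg.abs_integral_mul_norm_sq_le (hGN : GagliardoNirenberg μ M₀ B u)
    (hM : 0 < M₀) (hB : 0 ≤ B) (ha : 0 < a) (hm : ∫ x, ‖u x‖ ^ 2 ∂μ ≤ a ^ 2 * M₀)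
    (hu : Integrable (fun x => ‖u x‖ ^ 4) μ) (hn : Integrable (fun x => n x ^ 2) μ) :
    |∫ x, n x * ‖u x‖ ^ 2 ∂μ| ≤ a * shiftedFreeEnergy μ (M₀ * B) u n v := by
  have pow_four (x : E) : ‖u x‖ ^ 4 = (‖u x‖ ^ 2) ^ 2 := by ring
  have young := abs_integral_mul_le_add_integral_sq ha hn (hu.congr (.of_forall pow_four))
  simp only [← pow_four] at young
  calc
    _ ≤ a / 2 * (∫ x, n x ^ 2 ∂μ) + a⁻¹ / 2 * ∫ x, ‖u x‖ ^ 4 ∂μ := young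
    _ ≤ a / 2 * (∫ x, n x ^ 2 ∂μ) + a⁻¹ / 2 *
        (a ^ 2 * (2 * (∫ x, ‖fderiv ℝ u x‖ ^ 2 ∂μ) + M₀ * B * ∫ x, ‖u x‖ ^ 2 ∂μ)) := by
      gcongr
      exact hGN.integral_norm_pow_four_le hM hB hm
    _ = a * (M₀ * B / 2 * (∫ x, ‖u x‖ ^ 2 ∂μ) + (∫ x, ‖fderiv ℝ u x‖ ^ 2 ∂μ)
        + (1 / 2) * (∫ x, n x ^ 2 ∂μ)) := by
      field_simp
      ring
    _ ≤ a * shiftedFreeEnergy μ (M₀ * B) u n v := by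
      have h_mass : 0 ≤ M₀ * B * ∫ x, ‖u x‖ ^ 2 ∂μ := by positivity
      have hv : 0 ≤ ∫ x, v x ^ 2 ∂μ := by positivity
      rw [shiftedFreeEnergy]
      refine mul_le_mul_of_nonneg_left ?_ ha.le
      linarith

lemma GagliardoNirenberg.abs_zakharovEnergyOn_add_mass_sub_le (hGN : GagliardoNirenberg μ M₀ B u)
    (hM : 0 < M₀) (hB : 0 ≤ B) (ha : 0 < a) (hm : ∫ x, ‖u x‖ ^ 2 ∂μ ≤ a ^ 2 * M₀)
    (hu : Integrable (fun x => ‖u x‖ ^ 4) μ) (hn : Integrable (fun x => n x ^ 2) μ) :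
    |zakharovEnergyOn μ u n v + M₀ * B * (∫ x, ‖u x‖ ^ 2 ∂μ) - shiftedFreeEnergy μ (M₀ * B) u n v| ≤
      a * shiftedFreeEnergy μ (M₀ * B) u n v := by
  rw [zakharovEnergyOn_add_mass, add_sub_cancel_left]
  exact hGN.abs_integral_mul_norm_sq_le hM hB ha hm hu hn

end GeneralMeasure

lemma sub_le_one_sub_div_sq_mul {M ε : ℝ} (hM : 0 < M) :
    M - ε ≤ (1 - ε / (2 * M)) ^ 2 * M := by
  calc
    M - ε ≤ M - ε + (ε / (2 * M)) ^ 2 * M := le_add_of_nonneg_right (by positivity)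
    _ = (1 - ε / (2 * M)) ^ 2 * M := by field_simp; ring

theorem stmt12_general {E F : Type*} [NormedAddCommGroup E] [NormedSpace ℝ E] [MeasurableSpace E]
    [NormedAddCommGroup F] [NormedSpace ℝ F] {M₀ B ε₀ : ℝ} (hM : 0 < M₀) (hB : 0 < B)
    (hε : 0 < ε₀) :
    ∃ c > 0, ∃ C > 0, ∀ (μ : Measure E) (u : E → F) (n v : E → ℝ),
      AEStronglyMeasurable n μ →
      Differentiable ℝ u →
      Integrable (fun x => ‖u x‖ ^ 2) μ →
      Integrable (fun x => ‖u x‖ ^ 4) μ →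
      Integrable (fun x => ‖fderiv ℝ u x‖ ^ 2) μ →
      Integrable (fun x => n x ^ 2) μ →
      Integrable (fun x => v x ^ 2) μ →
      GagliardoNirenberg μ M₀ B u →
      ∫ x, ‖u x‖ ^ 2 ∂μ ≤ M₀ - ε₀ →
      c * zakharovNormSq μ u n v ≤ zakharovEnergyOn μ u n v + M₀ * B * (∫ x, ‖u x‖ ^ 2 ∂μ) ∧
        zakharovEnergyOn μ u n v + M₀ * B * (∫ x, ‖u x‖ ^ 2 ∂μ) ≤ C * zakharovNormSq μ u n v := by
  refine ⟨ε₀ / (2 * M₀) * min (M₀ * B) (1 / 2), by positivity, 2 * max (M₀ * B) 1, by positivity,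
    fun μ u n v _ _ _ hu _ hn _ hGN hm => ?_⟩
  have h_mass_nonneg : 0 ≤ ∫ x, ‖u x‖ ^ 2 ∂μ := by positivity
  have h_mass := hm.trans (sub_le_one_sub_div_sq_mul hM)
  have h_pos : 0 < ε₀ / (2 * M₀) := by positivity
  have h_lt_one : ε₀ / (2 * M₀) < 1 := by
    rw [div_lt_one (by positivity)]
    linarith
  have h_free_nonneg : 0 ≤ ε₀ / (2 * M₀) * shiftedFreeEnergy μ (M₀ * B) u n v :=
    mul_nonneg h_pos.le (shiftedFreeEnergy_nonneg (by positivity))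
  obtain ⟨h_lower, h_upper⟩ := abs_le.mp <| hGN.abs_zakharovEnergyOn_add_mass_sub_le (v := v)
    hM hB.le (sub_pos.mpr h_lt_one) h_mass hu hn
  rw [mul_assoc, mul_assoc 2]
  constructor
  · calc
      _ ≤ ε₀ / (2 * M₀) * shiftedFreeEnergy μ (M₀ * B) u n v := by
        gcongr
        exact min_mul_zakharovNormSq_le_shiftedFreeEnergy
      _ ≤ _ := by linarith
  · calc
      _ ≤ 2 * shiftedFreeEnergy μ (M₀ * B) u n v := by linarith
      _ ≤ _ := by
        gcongr
        exact shiftedFreeEnergy_le_max_mul_zakharovNormSq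

/-- Lemma 5.2(i): below the critical mass the shifted energy is equivalent to the
square of the H¹ × L² × L² norm. -/
theorem stmt12 (M₀ B ε₀ : ℝ) (hM : 0 < M₀) (hB : 0 < B) (hε : 0 < ε₀) (hεM : ε₀ < M₀) :
    ∃ c > 0, ∃ C > 0, ∀ (u : R2 → ℂ) (n v : R2 → ℝ),
      Periodic2 u → Periodic2 n → Periodic2 v →
      Measurable n → Measurable v →
      ContDiff ℝ 1 u →
      IntegrableOn (fun x => ‖u x‖ ^ 4) Q2 →
      IntegrableOn (fun x => ‖fderiv ℝ u x‖ ^ 2) Q2 →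
      IntegrableOn (fun x => (n x) ^ 2) Q2 →
      IntegrableOn (fun x => (v x) ^ 2) Q2 →
      ((∫ x in Q2, ‖u x‖ ^ 4) ≤
        (2 * M₀⁻¹ * (∫ x in Q2, ‖fderiv ℝ u x‖ ^ 2) + B * (∫ x in Q2, ‖u x‖ ^ 2)) *
          (∫ x in Q2, ‖u x‖ ^ 2)) →
      (∫ x in Q2, ‖u x‖ ^ 2) = M₀ - ε₀ →
      c * ((∫ x in Q2, ‖u x‖ ^ 2) + (∫ x in Q2, ‖fderiv ℝ u x‖ ^ 2)
            + (∫ x in Q2, (n x) ^ 2) + (∫ x in Q2, (v x) ^ 2))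
          ≤ zakharovEnergy u n v + M₀ * B * (∫ x in Q2, ‖u x‖ ^ 2) ∧
        zakharovEnergy u n v + M₀ * B * (∫ x in Q2, ‖u x‖ ^ 2)
          ≤ C * ((∫ x in Q2, ‖u x‖ ^ 2) + (∫ x in Q2, ‖fderiv ℝ u x‖ ^ 2)
            + (∫ x in Q2, (n x) ^ 2) + (∫ x in Q2, (v x) ^ 2)) := by
  obtain ⟨c, hc, C, hC, h⟩ := stmt12_general (E := R2) (F := ℂ) hM hB hε
  exact ⟨c, hc, C, hC, fun u n v _ _ _ hn _ hu hu4 hdu hn2 hv2 hGN hm =>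
    h (volume.restrict Q2) u n v hn.aestronglyMeasurable (hu.differentiable one_ne_zero)
      ((hu.continuous.norm.pow 2).continuousOn.integrableOn_compact isCompact_Q2)
      hu4 hdu hn2 hv2 hGN hm.le⟩
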